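/- Let α, β, λ ∈ ℂ with α ≠ 0 and λ² − λ + αβ = 0. Then for every f ∈ ker a, the vector ψ := b f + (α⁻¹(1 − λ)) • f satisfies (b ∘ a + α • (b ∘ (b ∘ a) − b) + β • a) ψ = λ • ψ; in other words, ψ is an eigenvector of the modified Landau operator Δ̃₂ = b∘a + α·b∘(b∘a − id) + β·a with eigenvalue λ = (1 ± √(1 − 4αβ))/2. -/

import Mathlib

/-!
Writing `λ = 1 - α c` and `β = λ c`, the modified Landau operator shifted by `λ` factors as
`Δ̃₂ - λ = (α b + λ) ((b + c) a - 1)`. By the Heisenberg relation `a (b + c) f = f` for `f ∈ ker a`,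
so `ψ = (b + c) f` is fixed by `(b + c) a` and is killed by the right factor.
-/

section Algebra

variable {R A : Type*} [CommRing R] [Ring A] [Algebra R A]

/-- The modified Landau operator `Δ̃₂ = b a + α b (b a - 1) + β a`, as an element of an arbitrary
algebra; the term `b (b a - 1)` is expanded to `b (b a) - b`. -/
def modifiedLandau (a b : A) (α β : R) : A :=
  b * a + α • (b * (b * a) - b) + β • a

theorem modifiedLandau_sub_smul_one (a b : A) {α c lam : R} (hc : α * c = 1 - lam) :
    modifiedLandau a b α (lam * c) - lam • 1 =
      (α • b + lam • 1) * ((b + c • 1) * a - 1) := by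
  obtain rfl : lam = 1 - α * c := by rw [hc, sub_sub_cancel]
  simp only [modifiedLandau, add_mul, mul_sub, mul_add, smul_mul_assoc, mul_smul_comm, one_mul,
    mul_one]
  module

end Algebra

section Heisenberg

variable {R V : Type*} [Semiring R] [AddCommGroup V] [Module R V]
  {a b : Module.End R V} {f : V}

theorem apply_apply_of_commutator_eq_one (hab : a * b - b * a = 1) (hf : a f = 0) :
    a (b f) = f := by
  simpa [hf] using LinearMap.congr_fun hab f

theorem apply_add_smul_of_commutator_eq_one (hab : a * b - b * a = 1) (hf : a f = 0) (c : R) :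
    a (b f + c • f) = f := by
  rw [map_add, map_smul, apply_apply_of_commutator_eq_one hab hf, hf, smul_zero, add_zero]

end Heisenberg

theorem modified_landau_eigenvector_general
    {R V : Type*} [CommRing R] [AddCommGroup V] [Module R V]
    {a b : Module.End R V} (hab : a * b - b * a = 1)
    {α β c lam : R} (hc : α * c = 1 - lam) (hβ : β = lam * c)
    {f : V} (hf : a f = 0) :
    modifiedLandau a b α β (b f + c • f) = lam • (b f + c • f) := by
  have hker : ((b + c • 1) * a - 1) (b f + c • f) = 0 := by
    simp [-map_add, apply_add_smul_of_commutator_eq_one hab hf c]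
  have hfactor := LinearMap.congr_fun (modifiedLandau_sub_smul_one a b hc) (b f + c • f)
  rw [Module.End.mul_apply, hker, map_zero, ← hβ] at hfactor
  exact sub_eq_zero.mp hfactor

/-- Let `V` be a complex vector space and `a, b : V → V` be `ℂ`-linear maps with
`a ∘ b − b ∘ a = id`. Let `α, β, λ ∈ ℂ` with `α ≠ 0` and `λ² − λ + αβ = 0`. Then for
`f ∈ ker a`, the vector `ψ = b f + (α⁻¹(1 − λ)) • f` satisfies
`(b∘a + α•(b∘(b∘a) − b) + β•a) ψ = λ • ψ`; i.e. `ψ` is an eigenvector of the modified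
Landau operator `Δ̃₂ = b∘a + α·b∘(b∘a − id) + β·a` with eigenvalue
`λ = (1 ± √(1 − 4αβ))/2`. -/
theorem modified_landau_eigenvector
    {V : Type*} [AddCommGroup V] [Module ℂ V]
    (a b : Module.End ℂ V) (hab : a * b - b * a = 1)
    (α β lam : ℂ) (hα : α ≠ 0) (hlam : lam ^ 2 - lam + α * β = 0)
    (f : V) (hf : a f = 0)
    (ψ : V) (hψ : ψ = b f + (α⁻¹ * (1 - lam)) • f) :
    (b * a + α • (b * (b * a) - b) + β • a) ψ = lam • ψ := by
  have hβ : β = lam * (α⁻¹ * (1 - lam)) := by field_simp; linear_combination hlam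
  exact hψ ▸ modified_landau_eigenvector_general hab (mul_inv_cancel_left₀ hα _) hβ hf
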